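/- arXiv:2404.10350 — 7 statements merged into one kernel-verified Lean document; each statement's English description precedes it below -/
import Mathlib

section
/- Let u_ρ ∈ X satisfy the regularized variational equation with data ū = ι w, where w ∈ X is such that there exists f ∈ H with ⟨w, v⟩_X = ⟨f, ι v⟩_H for all v ∈ X (i.e. D w = f ∈ L²(Q) in the paper's notation). Then ‖ι u_ρ − ū‖_H ≤ ρ ‖f‖_H. -/
open RealInnerProductSpace

/-! If `D w = f`, then `w` itself solves the regularized equation, with data `ι w + ρ f`. Testing
the equation with its own solution shows that `ι u` is bounded by the data, so comparing the data
`ι w` and `ι w + ρ f` bounds the error by `ρ ‖f‖`. -/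

section Regularization

open scoped InnerProductSpace

variable {𝕜 X H : Type*} [RCLike 𝕜]
  [SeminormedAddCommGroup X] [InnerProductSpace 𝕜 X]
  [SeminormedAddCommGroup H] [InnerProductSpace 𝕜 H]

theorem norm_le_norm_of_norm_sq_le_re_inner {x y : H} (h : ‖x‖ ^ 2 ≤ RCLike.re ⟪y, x⟫_𝕜) :
    ‖x‖ ≤ ‖y‖ := by
  have hxy : ‖x‖ ^ 2 ≤ ‖y‖ * ‖x‖ := h.trans (re_inner_le_norm y x)
  rcases (norm_nonneg x).eq_or_lt with hx | hx
  · exact hx ▸ norm_nonneg y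
  · exact le_of_mul_le_mul_right (sq ‖x‖ ▸ hxy) hx

/-- `u` solves the variational problem with regularization parameter `ρ` and data `g`: for `0 ≤ ρ`
this is the optimality condition for minimizing `‖ι u - g‖ ^ 2 + ρ * ‖u‖ ^ 2`. -/
def IsRegularizedSolution (ι : X →ₗ[𝕜] H) (ρ : ℝ) (g : H) (u : X) : Prop :=
  ∀ v : X, ⟪ι u, ι v⟫_𝕜 + ρ * ⟪u, v⟫_𝕜 = ⟪g, ι v⟫_𝕜

namespace IsRegularizedSolution

variable {ι : X →ₗ[𝕜] H} {ρ : ℝ} {g g' : H} {u u' : X}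

theorem sub (hu : IsRegularizedSolution ι ρ g u) (hu' : IsRegularizedSolution ι ρ g' u') :
    IsRegularizedSolution ι ρ (g - g') (u - u') := fun v => by
  rw [map_sub, inner_sub_left, inner_sub_left, inner_sub_left, ← hu v, ← hu' v]
  ring

theorem of_inner_eq {w : X} {f : H} (hw : ∀ v : X, ⟪w, v⟫_𝕜 = ⟪f, ι v⟫_𝕜) (ρ : ℝ) :
    IsRegularizedSolution ι ρ (ι w + (ρ : 𝕜) • f) w := fun v => by
  rw [inner_add_left, inner_smul_left, RCLike.conj_ofReal, hw v]

theorem norm_map_le (hu : IsRegularizedSolution ι ρ g u) (hρ : 0 ≤ ρ) : ‖ι u‖ ≤ ‖g‖ := by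
  have energy : ‖ι u‖ ^ 2 + ρ * ‖u‖ ^ 2 = RCLike.re ⟪g, ι u⟫_𝕜 := by
    rw [← hu u, map_add, RCLike.re_ofReal_mul, inner_self_eq_norm_sq, inner_self_eq_norm_sq]
  refine norm_le_norm_of_norm_sq_le_re_inner (𝕜 := 𝕜) ?_
  exact energy ▸ le_add_of_nonneg_right (by positivity)

theorem norm_map_sub_map_le (hu : IsRegularizedSolution ι ρ g u)
    (hu' : IsRegularizedSolution ι ρ g' u') (hρ : 0 ≤ ρ) : ‖ι u - ι u'‖ ≤ ‖g - g'‖ :=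
  map_sub ι u u' ▸ (hu.sub hu').norm_map_le hρ

end IsRegularizedSolution

theorem stmt_3_general {ι : X →ₗ[𝕜] H} {ρ : ℝ} (hρ : 0 ≤ ρ) {w : X} {f : H}
    (hw : ∀ v : X, ⟪w, v⟫_𝕜 = ⟪f, ι v⟫_𝕜) {u : X} (hu : IsRegularizedSolution ι ρ (ι w) u) :
    ‖ι u - ι w‖ ≤ ρ * ‖f‖ :=
  calc
    ‖ι u - ι w‖ ≤ ‖ι w - (ι w + (ρ : 𝕜) • f)‖ :=
      hu.norm_map_sub_map_le (.of_inner_eq hw ρ) hρ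
    _ = ρ * ‖f‖ := by
      rw [sub_add_cancel_left, norm_neg, norm_smul, RCLike.norm_of_nonneg hρ]

end Regularization

/-- Let `u_ρ ∈ X` satisfy the regularized variational equation with data
`ū = ι w`, where `w ∈ X` is such that there exists `f ∈ H` with
`⟨w, v⟩_X = ⟨f, ι v⟩_H` for all `v ∈ X`. Then `‖ι u_ρ − ū‖_H ≤ ρ ‖f‖_H`. -/
theorem stmt_3
    {X H : Type*} [NormedAddCommGroup X] [InnerProductSpace ℝ X] [CompleteSpace X]
    [NormedAddCommGroup H] [InnerProductSpace ℝ H] [CompleteSpace H]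
    (ι : X →L[ℝ] H) (ρ : ℝ) (hρ : 0 < ρ) (w : X) (f : H)
    (hw : ∀ v : X, ⟪w, v⟫ = ⟪f, ι v⟫)
    (ubar : H) (hubar : ubar = ι w) (uρ : X)
    (heq : ∀ v : X, ⟪ι uρ, ι v⟫ + ρ * ⟪uρ, v⟫ = ⟪ubar, ι v⟫) :
    ‖ι uρ - ubar‖ ≤ ρ * ‖f‖ := by
  subst hubar
  exact stmt_3_general (ι := ι.toLinearMap) hρ.le hw heq
end

section
/- Let u_ρ ∈ X satisfy the regularized variational equation with data ū = ι w, where w ∈ X is such that there exists f ∈ H with ⟨w, v⟩_X = ⟨f, ι v⟩_H for all v ∈ X. Then ‖u_ρ − w‖_X ≤ ρ^{1/2} ‖f‖_H. -/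
open RealInnerProductSpace

/-!
The error `u_ρ - w` solves the same regularized equation, with data `-ρ f` in place of `ι w`.
It therefore suffices to bound a regularized solution `u` by its data `g`: testing the equation
with `u` itself and completing the square in `‖ι u‖` gives `ρ ‖u‖² ≤ (‖g‖ / 2)²`.
This yields the rate with constant `1 / 2`, which is attained for scalars `X = H = ℝ`, `ι² = ρ`.
-/

section Tikhonov

open scoped InnerProductSpace

variable {𝕜 X H : Type*} [RCLike 𝕜]
  [SeminormedAddCommGroup X] [InnerProductSpace 𝕜 X]
  [SeminormedAddCommGroup H] [InnerProductSpace 𝕜 H]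
  {ι : X →ₗ[𝕜] H} {ρ : ℝ} {f g : H} {u w : X}

/-- `u` is a Tikhonov-regularized solution of `ι u = g` with parameter `ρ`: the weak form of
`(ι* ι + ρ) u = ι* g`, which needs no adjoint and hence neither continuity of `ι` nor
completeness. -/
def IsTikhonovSolution (ι : X →ₗ[𝕜] H) (ρ : ℝ) (g : H) (u : X) : Prop :=
  ∀ v : X, ⟪ι u, ι v⟫_𝕜 + ρ * ⟪u, v⟫_𝕜 = ⟪g, ι v⟫_𝕜

namespace IsTikhonovSolution

theorem energy_eq (hu : IsTikhonovSolution ι ρ g u) :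
    ‖ι u‖ ^ 2 + ρ * ‖u‖ ^ 2 = RCLike.re ⟪g, ι u⟫_𝕜 := by
  rw [← hu u, map_add, RCLike.re_ofReal_mul, inner_self_eq_norm_sq, inner_self_eq_norm_sq]

theorem mul_norm_sq_le (hu : IsTikhonovSolution ι ρ g u) :
    ρ * ‖u‖ ^ 2 ≤ (‖g‖ / 2) ^ 2 :=
  calc ρ * ‖u‖ ^ 2 = RCLike.re ⟪g, ι u⟫_𝕜 - ‖ι u‖ ^ 2 := eq_sub_of_add_eq' hu.energy_eq
    _ ≤ ‖g‖ * ‖ι u‖ - ‖ι u‖ ^ 2 := by gcongr; exact re_inner_le_norm g (ι u)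
    _ = (‖g‖ / 2) ^ 2 - (‖ι u‖ - ‖g‖ / 2) ^ 2 := by ring
    _ ≤ (‖g‖ / 2) ^ 2 := sub_le_self _ (sq_nonneg _)

theorem sqrt_mul_norm_le (hu : IsTikhonovSolution ι ρ g u) :
    √ρ * ‖u‖ ≤ ‖g‖ / 2 := by
  rcases le_total ρ 0 with hρ | hρ
  · rw [Real.sqrt_eq_zero_of_nonpos hρ, zero_mul]
    positivity
  · refine le_of_sq_le_sq ?_ (by positivity)
    rw [mul_pow, Real.sq_sqrt hρ]
    exact hu.mul_norm_sq_le

theorem sub_of_source_condition (hu : IsTikhonovSolution ι ρ (ι w) u)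
    (hw : ∀ v : X, ⟪w, v⟫_𝕜 = ⟪f, ι v⟫_𝕜) :
    IsTikhonovSolution ι ρ (-((ρ : 𝕜) • f)) (u - w) := fun v => by
  rw [map_sub, inner_sub_left, inner_sub_left, inner_neg_left, inner_smul_left,
    RCLike.conj_ofReal, ← hw v]
  linear_combination hu v

end IsTikhonovSolution

theorem stmt_4_general (hρ : 0 < ρ) (hw : ∀ v : X, ⟪w, v⟫_𝕜 = ⟪f, ι v⟫_𝕜)
    (hu : IsTikhonovSolution ι ρ (ι w) u) :
    ‖u - w‖ ≤ √ρ / 2 * ‖f‖ := by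
  refine le_of_mul_le_mul_left ?_ (Real.sqrt_pos.2 hρ)
  calc √ρ * ‖u - w‖ ≤ ‖-((ρ : 𝕜) • f)‖ / 2 := (hu.sub_of_source_condition hw).sqrt_mul_norm_le
    _ = ρ * ‖f‖ / 2 := by rw [norm_neg, norm_smul, RCLike.norm_of_nonneg hρ.le]
    _ = √ρ * √ρ * ‖f‖ / 2 := by rw [Real.mul_self_sqrt hρ.le]
    _ = √ρ * (√ρ / 2 * ‖f‖) := by ring

end Tikhonov

/-- Let `u_ρ ∈ X` satisfy the regularized variational equation with data
`ū = ι w`, where `w ∈ X` is such that there exists `f ∈ H` with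
`⟨w, v⟩_X = ⟨f, ι v⟩_H` for all `v ∈ X`. Then `‖u_ρ − w‖_X ≤ ρ^(1/2) ‖f‖_H`. -/
theorem stmt_4
    {X H : Type*} [NormedAddCommGroup X] [InnerProductSpace ℝ X] [CompleteSpace X]
    [NormedAddCommGroup H] [InnerProductSpace ℝ H] [CompleteSpace H]
    (ι : X →L[ℝ] H) (ρ : ℝ) (hρ : 0 < ρ) (w : X) (f : H)
    (hw : ∀ v : X, ⟪w, v⟫ = ⟪f, ι v⟫)
    (ubar : H) (hubar : ubar = ι w) (uρ : X)
    (heq : ∀ v : X, ⟪ι uρ, ι v⟫ + ρ * ⟪uρ, v⟫ = ⟪ubar, ι v⟫) :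
    ‖uρ - w‖ ≤ Real.sqrt ρ * ‖f‖ := by
  subst hubar
  have half_rate : ‖uρ - w‖ ≤ √ρ / 2 * ‖f‖ := stmt_4_general (ι := ι.toLinearMap) hρ hw heq
  exact half_rate.trans (by gcongr; exact half_le_self (Real.sqrt_nonneg ρ))
end

section
/- Quasi-optimal discretization error bound: let X_h ⊆ X be a closed subspace, let u_ρ ∈ X satisfy the regularized variational equation against all v ∈ X with data ū = ι w, where w ∈ X admits f ∈ H with ⟨w, v⟩_X = ⟨f, ι v⟩_H for all v ∈ X, and let u_{ρ,h} ∈ X_h satisfy the equation against all v_h ∈ X_h. Then for every v_h ∈ X_h, ‖ι u_{ρ,h} − ū‖_H² ≤ 10 ρ² ‖f‖_H² + 4 ( ‖ι(w − v_h)‖_H² + ρ ‖w − v_h‖_X² ). -/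
open RealInnerProductSpace

/-!
Put `e = uₕ - w` and `d = w - vₕ`. Replacing `⟪w, v⟫` by `⟪f, ι v⟫` in the discrete equation gives
`⟪ι e + ρ f, ι v⟫ + ρ ⟪e, v⟫ = 0` for discrete `v`. In `H × X` with weights `1` and `ρ`, this says
that `x + a` is orthogonal to `(ι v, v)`, where `x = (ι e, e)` and `a = (ρ f, 0)`. The test vector
`v = uₕ - vₕ = e + d` and `b = (ι d, d)` give `x + a ⟂ x + b`, so by Thales `x` lies on the sphere
with antipodal points `-a` and `-b`, that is, `‖x‖² + ‖x + a + b‖² = ‖a‖² + ‖b‖²`. Hence the energy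
error `‖x‖²` is at most `‖a‖² + ‖b‖²`, with constants `1` in place of `10` and `4`.
-/

section

open scoped InnerProductSpace

variable {𝕜 X H : Type*} [RCLike 𝕜]
  [SeminormedAddCommGroup X] [InnerProductSpace 𝕜 X]
  [SeminormedAddCommGroup H] [InnerProductSpace 𝕜 H]

theorem norm_sq_add_norm_add_add_sq (x a b : H) :
    ‖x‖ ^ 2 + ‖x + a + b‖ ^ 2 =
      ‖a‖ ^ 2 + ‖b‖ ^ 2 + 2 * RCLike.re ⟪x + a, x + b⟫_𝕜 := by
  have h_sum := norm_add_sq (𝕜 := 𝕜) (x + a) b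
  have h_xa := norm_add_sq (𝕜 := 𝕜) x a
  have h_inner : RCLike.re ⟪x + a, x + b⟫_𝕜 =
      ‖x‖ ^ 2 + RCLike.re ⟪x, a⟫_𝕜 + RCLike.re ⟪x + a, b⟫_𝕜 := by
    rw [inner_add_right, inner_add_left x a x, map_add, map_add, inner_self_eq_norm_sq,
      inner_re_symm a x]
  linarith

theorem inner_regularized_error_eq_zero {ι : X →ₗ[𝕜] H} {ρ : ℝ} {u w v : X} {f : H}
    (hw : ⟪w, v⟫_𝕜 = ⟪f, ι v⟫_𝕜)
    (hu : ⟪ι u, ι v⟫_𝕜 + ρ * ⟪u, v⟫_𝕜 = ⟪ι w, ι v⟫_𝕜) :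
    ⟪ι (u - w) + (ρ : 𝕜) • f, ι v⟫_𝕜 + ρ * ⟪u - w, v⟫_𝕜 = 0 := by
  rw [map_sub, inner_add_left, inner_sub_left, inner_sub_left, inner_smul_left,
    RCLike.conj_ofReal, hw]
  linear_combination hu

theorem regularized_error_energy_identity {ι : X →ₗ[𝕜] H} {ρ : ℝ} {u w v : X} {f : H}
    (hw : ⟪w, u - v⟫_𝕜 = ⟪f, ι (u - v)⟫_𝕜)
    (hu : ⟪ι u, ι (u - v)⟫_𝕜 + ρ * ⟪u, u - v⟫_𝕜 = ⟪ι w, ι (u - v)⟫_𝕜) :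
    ‖ι (u - w)‖ ^ 2 + ρ * ‖u - w‖ ^ 2 +
        (‖ι (u - v) + (ρ : 𝕜) • f‖ ^ 2 + ρ * ‖u - v‖ ^ 2) =
      ρ ^ 2 * ‖f‖ ^ 2 + (‖ι (w - v)‖ ^ 2 + ρ * ‖w - v‖ ^ 2) := by
  have h_add : u - w + (w - v) = u - v := sub_add_sub_cancel u w v
  have h_orth := congrArg RCLike.re (inner_regularized_error_eq_zero hw hu)
  rw [map_add, RCLike.re_ofReal_mul, map_zero] at h_orth
  have h_data := norm_sq_add_norm_add_add_sq (𝕜 := 𝕜) (ι (u - w)) ((ρ : 𝕜) • f) (ι (w - v))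
  rw [add_right_comm, ← map_add, h_add, norm_smul, RCLike.norm_ofReal, mul_pow, sq_abs] at h_data
  have h_reg := norm_sq_add_norm_add_add_sq (𝕜 := 𝕜) (u - w) 0 (w - v)
  rw [add_zero, h_add, norm_zero] at h_reg
  linear_combination h_data + ρ * h_reg + 2 * h_orth

theorem stmt_8_general (ι : X →ₗ[𝕜] H) {ρ : ℝ} (hρ : 0 ≤ ρ) {w : X} {f : H}
    {Xh : Submodule 𝕜 X} (hw : ∀ v ∈ Xh, ⟪w, v⟫_𝕜 = ⟪f, ι v⟫_𝕜)
    {uh : X} (huh : uh ∈ Xh)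
    (heqh : ∀ v ∈ Xh, ⟪ι uh, ι v⟫_𝕜 + ρ * ⟪uh, v⟫_𝕜 = ⟪ι w, ι v⟫_𝕜)
    {vh : X} (hvh : vh ∈ Xh) :
    ‖ι (uh - w)‖ ^ 2 + ρ * ‖uh - w‖ ^ 2 ≤
      ρ ^ 2 * ‖f‖ ^ 2 + (‖ι (w - vh)‖ ^ 2 + ρ * ‖w - vh‖ ^ 2) := by
  have h_test : uh - vh ∈ Xh := Xh.sub_mem huh hvh
  rw [← regularized_error_energy_identity (hw _ h_test) (heqh _ h_test)]
  exact le_add_of_nonneg_right (by positivity)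

end

/-- quasi-optimal discretization error bound: let `X_h ⊆ X` be a closed
subspace, let `u_ρ ∈ X` satisfy the regularized variational equation against all `v ∈ X`
with data `ū = ι w`, where `w ∈ X` admits `f ∈ H` with `⟨w, v⟩_X = ⟨f, ι v⟩_H` for all
`v ∈ X`, and let `u_{ρ,h} ∈ X_h` satisfy the equation against all `v_h ∈ X_h`. Then for
every `v_h ∈ X_h`,
`‖ι u_{ρ,h} − ū‖_H² ≤ 10 ρ² ‖f‖_H² + 4 (‖ι(w − v_h)‖_H² + ρ ‖w − v_h‖_X²)`. -/
theorem stmt_8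
    {X H : Type*} [NormedAddCommGroup X] [InnerProductSpace ℝ X] [CompleteSpace X]
    [NormedAddCommGroup H] [InnerProductSpace ℝ H] [CompleteSpace H]
    (ι : X →L[ℝ] H) (ρ : ℝ) (hρ : 0 < ρ)
    (w : X) (f : H) (hw : ∀ v : X, ⟪w, v⟫ = ⟪f, ι v⟫)
    (ubar : H) (hubar : ubar = ι w)
    (Xh : Submodule ℝ X) (hXh : IsClosed (Xh : Set X))
    (uρ : X) (heq : ∀ v : X, ⟪ι uρ, ι v⟫ + ρ * ⟪uρ, v⟫ = ⟪ubar, ι v⟫)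
    (uρh : X) (huρh : uρh ∈ Xh)
    (heqh : ∀ vh ∈ Xh, ⟪ι uρh, ι vh⟫ + ρ * ⟪uρh, vh⟫ = ⟪ubar, ι vh⟫) :
    ∀ vh ∈ Xh,
      ‖ι uρh - ubar‖ ^ 2 ≤
        10 * ρ ^ 2 * ‖f‖ ^ 2 + 4 * (‖ι (w - vh)‖ ^ 2 + ρ * ‖w - vh‖ ^ 2) := by
  intro vh hvh
  rw [hubar, ← map_sub]
  have h_energy : ‖ι (uρh - w)‖ ^ 2 + ρ * ‖uρh - w‖ ^ 2 ≤
      ρ ^ 2 * ‖f‖ ^ 2 + (‖ι (w - vh)‖ ^ 2 + ρ * ‖w - vh‖ ^ 2) :=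
    stmt_8_general ι.toLinearMap hρ.le (fun v _ => hw v) huρh (hubar ▸ heqh) hvh
  have h_err : 0 ≤ ρ * ‖uρh - w‖ ^ 2 := by positivity
  have h_source : 0 ≤ ρ ^ 2 * ‖f‖ ^ 2 := by positivity
  have h_approx : 0 ≤ ‖ι (w - vh)‖ ^ 2 + ρ * ‖w - vh‖ ^ 2 := by positivity
  linarith
end

section
/- For every interior index i with 1 ≤ i ≤ N−1 and every k ∈ ℕ, the Fourier coefficient of the interior hat function satisfies A_k^i = (2/N) · (sin² x_k / x_k²) · sin((π/2 + kπ) i / N). -/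
open Real

/-- The piecewise linear hat function `φ_j` on `[0,T]` for a uniform mesh with `N`
elements of size `h = T/N` and nodes `t_i = i h`: for `j = 1,…,N−1` the interior hat
`φ_j(t) = max(0, 1 − |t − t_j|/h)`, and for `j = N` the boundary hat
`φ_N(t) = max(0, 1 − (t_N − t)/h)`. -/
noncomputable def hatFn (N : ℕ) (T : ℝ) (j : ℕ) (t : ℝ) : ℝ :=
  if j = N then max 0 (1 - ((N : ℝ) * (T / N) - t) / (T / N))
  else max 0 (1 - |t - (j : ℝ) * (T / N)| / (T / N))

/-- The Fourier coefficient `A_k^j = (2/T) ∫_0^T φ_j(t) sin((π/2 + kπ) t / T) dt`. -/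
noncomputable def fourierCoef (N : ℕ) (T : ℝ) (k j : ℕ) : ℝ :=
  (2 / T) * ∫ t in (0 : ℝ)..T, hatFn N T j t * Real.sin ((π / 2 + k * π) * t / T)

/-!
Up to the factor `h`, the hat function of half-width `h` at `c` is the Peano kernel of the
second central difference: adding the first-order Taylor expansions of `f` from `c` to `c + h` and
to `c - h`, with integral remainders, cancels `f' c` and leaves
`∫ φ f'' = (f (c + h) - 2 f c + f (c - h)) / h`. The sine is an eigenfunction of both the second
derivative and the second central difference, so its integral against `φ` is a multiple of
`sin (ω c)`; half-angle formulas identify the multiplier as `h sinc² (ω h / 2)`.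
-/

open Set MeasureTheory

section SecondDifference

variable {E : Type*} [NormedAddCommGroup E] [NormedSpace ℝ E]

theorem integral_sub_smul_deriv2 [CompleteSpace E] {f f' f'' : ℝ → E} {c x : ℝ}
    (hf : ∀ t ∈ uIcc c x, HasDerivAt f (f' t) t) (hf' : ∀ t ∈ uIcc c x, HasDerivAt f' (f'' t) t)
    (hf'' : IntervalIntegrable f'' volume c x) :
    ∫ t in c..x, (x - t) • f'' t = f x - f c - (x - c) • f' c := by
  have integral_f' : ∫ t in c..x, f' t = f x - f c :=
    intervalIntegral.integral_eq_sub_of_hasDerivAt hf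
      (HasDerivAt.continuousOn hf').intervalIntegrable
  have hasDerivAt_sub (t : ℝ) : HasDerivAt (fun t => x - t) (-1) t := (hasDerivAt_id t).const_sub x
  rw [intervalIntegral.integral_smul_deriv_eq_deriv_smul (fun t _ => hasDerivAt_sub t) hf'
    intervalIntegrable_const hf'']
  simp only [neg_smul, one_smul, intervalIntegral.integral_neg, integral_f', sub_self, zero_smul]
  abel

/-- The hat function of height `1` centred at `c` with half-width `h > 0`: the kernel whose
integral against `f''` is a second central difference of `f`. -/
noncomputable def hat (c h t : ℝ) : ℝ := max 0 (1 - |t - c| / h)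

theorem continuous_hat (c h : ℝ) : Continuous (hat c h) := by
  unfold hat
  fun_prop

theorem support_hat_subset {h : ℝ} (hh : 0 < h) (c : ℝ) :
    Function.support (hat c h) ⊆ Ioo (c - h) (c + h) := by
  intro t ht
  by_contra hmem
  have h_le : h ≤ |t - c| := by
    rw [← Real.ball_eq_Ioo, Metric.mem_ball, Real.dist_eq] at hmem
    exact not_lt.mp hmem
  exact ht (max_eq_left (sub_nonpos.mpr ((one_le_div hh).mpr h_le)))

-- Letting `r` have either sign treats both halves of the hat at once.
theorem hat_abs_of_mem_uIcc {c r t : ℝ} (hr : r ≠ 0) (ht : t ∈ uIcc c (c + r)) :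
    hat c |r| t = r⁻¹ * (c + r - t) := by
  have le_one : |t - c| / |r| ≤ 1 := by
    rw [div_le_one (abs_pos.mpr hr)]
    simpa using abs_sub_left_of_mem_uIcc ht
  have abs_div_eq : |t - c| / |r| = (t - c) / r := by
    rw [← abs_div, abs_eq_self]
    rcases hr.lt_or_gt with hneg | hpos
    · rw [uIcc_of_ge (by linarith)] at ht
      exact div_nonneg_of_nonpos (sub_nonpos.mpr ht.2) hneg.le
    · rw [uIcc_of_le (by linarith)] at ht
      exact div_nonneg (sub_nonneg.mpr ht.1) hpos.le
  rw [hat, max_eq_right (sub_nonneg.mpr le_one), abs_div_eq]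
  field_simp
  ring

theorem integral_hat_smul_of_Icc_subset {a b c h : ℝ} (hh : 0 < h) (ha : a ≤ c - h)
    (hb : c + h ≤ b) (g : ℝ → E) :
    ∫ t in a..b, hat c h t • g t = ∫ t in (c - h)..(c + h), hat c h t • g t := by
  have support_subset : Function.support (fun t => hat c h t • g t) ⊆ Ioo (c - h) (c + h) :=
    (Function.support_smul_subset_left _ _).trans (support_hat_subset hh c)
  rw [intervalIntegral.integral_eq_integral_of_support_subset
      (support_subset.trans (Ioo_subset_Ioc_self.trans (Ioc_subset_Ioc ha hb))),
    intervalIntegral.integral_eq_integral_of_support_subset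
      (support_subset.trans Ioo_subset_Ioc_self)]

theorem integral_hat_abs_smul_deriv2 [CompleteSpace E] {f f' f'' : ℝ → E} {c r : ℝ} (hr : r ≠ 0)
    (hf : ∀ t ∈ uIcc c (c + r), HasDerivAt f (f' t) t)
    (hf' : ∀ t ∈ uIcc c (c + r), HasDerivAt f' (f'' t) t)
    (hf'' : IntervalIntegrable f'' volume c (c + r)) :
    ∫ t in c..(c + r), hat c |r| t • f'' t = r⁻¹ • (f (c + r) - f c) - f' c := by
  calc ∫ t in c..(c + r), hat c |r| t • f'' t
      = ∫ t in c..(c + r), r⁻¹ • (c + r - t) • f'' t :=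
        intervalIntegral.integral_congr fun t ht => by
          simp only [hat_abs_of_mem_uIcc hr ht, mul_smul]
    _ = r⁻¹ • (f (c + r) - f c - r • f' c) := by
        rw [intervalIntegral.integral_smul, integral_sub_smul_deriv2 hf hf' hf'',
          add_sub_cancel_left]
    _ = r⁻¹ • (f (c + r) - f c) - f' c := by rw [smul_sub, inv_smul_smul₀ hr]

theorem integral_hat_smul_deriv2 [CompleteSpace E] {f f' f'' : ℝ → E} {a b c h : ℝ} (hh : 0 < h)
    (ha : a ≤ c - h) (hb : c + h ≤ b)
    (hf : ∀ t ∈ Icc (c - h) (c + h), HasDerivAt f (f' t) t)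
    (hf' : ∀ t ∈ Icc (c - h) (c + h), HasDerivAt f' (f'' t) t)
    (hf'' : IntervalIntegrable f'' volume (c - h) (c + h)) :
    ∫ t in a..b, hat c h t • f'' t = h⁻¹ • (f (c + h) - (2 : ℝ) • f c + f (c - h)) := by
  have left_subset : uIcc c (c - h) ⊆ Icc (c - h) (c + h) :=
    uIcc_subset_Icc ⟨by linarith, by linarith⟩ ⟨le_rfl, by linarith⟩
  have right_subset : uIcc c (c + h) ⊆ Icc (c - h) (c + h) :=
    uIcc_subset_Icc ⟨by linarith, by linarith⟩ ⟨by linarith, le_rfl⟩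
  have Icc_eq : uIcc (c - h) (c + h) = Icc (c - h) (c + h) := uIcc_of_le (by linarith)
  have left_integrable : IntervalIntegrable f'' volume c (c - h) :=
    hf''.mono_set (Icc_eq ▸ left_subset)
  have right_integrable : IntervalIntegrable f'' volume c (c + h) :=
    hf''.mono_set (Icc_eq ▸ right_subset)
  have left_integral := integral_hat_abs_smul_deriv2 (c := c) (neg_ne_zero.mpr hh.ne')
    (fun t ht => hf t (left_subset ht)) (fun t ht => hf' t (left_subset ht)) left_integrable
  have right_integral := integral_hat_abs_smul_deriv2 hh.ne'
    (fun t ht => hf t (right_subset ht)) (fun t ht => hf' t (right_subset ht)) right_integrable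
  rw [abs_neg, abs_of_pos hh, ← sub_eq_add_neg] at left_integral
  rw [abs_of_pos hh] at right_integral
  rw [integral_hat_smul_of_Icc_subset hh ha hb, ← intervalIntegral.integral_interval_sub_left
      (right_integrable.continuousOn_smul (continuous_hat c h).continuousOn)
      (left_integrable.continuousOn_smul (continuous_hat c h).continuousOn),
    left_integral, right_integral]
  module

end SecondDifference

theorem sin_second_difference (x y : ℝ) :
    sin (x + y) - 2 * sin x + sin (x - y) = -4 * sin (y / 2) ^ 2 * sin x := by
  rw [sin_add, sin_sub, sin_sq_eq_half_sub, mul_div_cancel₀ y two_ne_zero]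
  ring

theorem integral_hat_mul_sin {a b c h : ℝ} (hh : 0 < h) (ha : a ≤ c - h) (hb : c + h ≤ b) (ω : ℝ) :
    ∫ t in a..b, hat c h t * sin (ω * t) = h * sinc (ω * h / 2) ^ 2 * sin (ω * c) := by
  rcases eq_or_ne ω 0 with rfl | hω
  · simp
  have hasDerivAt_mul (t : ℝ) : HasDerivAt (fun t => ω * t) ω t := hasDerivAt_const_mul ω
  have hasDerivAt_f (t : ℝ) :
      HasDerivAt (fun t => -sin (ω * t) / ω ^ 2) (-cos (ω * t) / ω) t :=
    ((hasDerivAt_mul t).sin.neg.div_const (ω ^ 2)).congr_deriv (by field_simp)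
  have hasDerivAt_f' (t : ℝ) : HasDerivAt (fun t => -cos (ω * t) / ω) (sin (ω * t)) t :=
    ((hasDerivAt_mul t).cos.neg.div_const ω).congr_deriv (by field_simp)
  have sin_integrable : IntervalIntegrable (fun t => sin (ω * t)) volume (c - h) (c + h) :=
    Continuous.intervalIntegrable (by fun_prop) _ _
  calc ∫ t in a..b, hat c h t * sin (ω * t)
      = -(sin (ω * c + ω * h) - 2 * sin (ω * c) + sin (ω * c - ω * h)) / (h * ω ^ 2) := by
        refine (integral_hat_smul_deriv2 hh ha hb (fun t _ => hasDerivAt_f t)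
          (fun t _ => hasDerivAt_f' t) sin_integrable).trans ?_
        simp only [smul_eq_mul, mul_add, mul_sub]
        field_simp
        ring
    _ = h * sinc (ω * h / 2) ^ 2 * sin (ω * c) := by
        rw [sin_second_difference, sinc_of_ne_zero (by positivity)]
        field_simp
        ring

theorem hatFn_eq_hat_of_ne {N j : ℕ} (hj : j ≠ N) (T : ℝ) :
    hatFn N T j = hat (j * (T / N)) (T / N) :=
  funext fun _ => if_neg hj

/-- For every interior index `i` with `1 ≤ i ≤ N−1` and every `k ∈ ℕ`, the
Fourier coefficient of the interior hat function satisfies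
`A_k^i = (2/N) · (sin² x_k / x_k²) · sin((π/2 + kπ) i / N)`,
where `x_k = (π/2 + kπ)/(2N)`. -/
theorem stmt_9 (N : ℕ) (hN : 1 ≤ N) (T : ℝ) (hT : 0 < T)
    (i : ℕ) (hi1 : 1 ≤ i) (hi2 : i ≤ N - 1) (k : ℕ) :
    fourierCoef N T k i =
      (2 / N) * (Real.sin ((π / 2 + k * π) / (2 * N)) ^ 2 / ((π / 2 + k * π) / (2 * N)) ^ 2) *
        Real.sin ((π / 2 + k * π) * i / N) := by
  have hN_pos : (0 : ℝ) < N := by exact_mod_cast hN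
  have hi_lower : (1 : ℝ) ≤ i := by exact_mod_cast hi1
  have hi_upper : (i : ℝ) + 1 ≤ N := by exact_mod_cast (by omega : i + 1 ≤ N)
  have hh : 0 < T / N := by positivity
  have left_le : 0 ≤ i * (T / N) - T / N := sub_nonneg.mpr (le_mul_of_one_le_left hh.le hi_lower)
  have le_right : i * (T / N) + T / N ≤ T := by
    calc i * (T / N) + T / N = (i + 1) * (T / N) := by ring
      _ ≤ N * (T / N) := by gcongr
      _ = T := mul_div_cancel₀ T hN_pos.ne'
  have frequency_pos : 0 < π / 2 + k * π := by positivity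
  rw [fourierCoef, hatFn_eq_hat_of_ne (by omega)]
  generalize π / 2 + k * π = a at frequency_pos ⊢
  have half_angle : a / T * (T / N) / 2 = a / (2 * N) := by field_simp
  have angle_at_node : a / T * (i * (T / N)) = a * i / N := by field_simp
  simp only [mul_div_right_comm a _ T]
  rw [integral_hat_mul_sin hh left_le le_right, half_angle, angle_at_node,
    sinc_of_ne_zero (by positivity), div_pow]
  field_simp
end

section
/- For the boundary hat function and every k ∈ ℕ, the Fourier coefficient satisfies A_k^N = (1/N) · (sin² x_k / x_k²) · sin(π/2 + kπ). -/
open Real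

/-!
On `[0, T]` the boundary hat function is a multiple of the positive part of `t - (T - T / N)`, so its
sine moments are integrals of a linear function against a sine over the last mesh cell, and one
integration by parts evaluates them. At the frequencies `w = π / 2 + k π` the boundary term
vanishes because `cos w = 0`, and so does one of the two terms of `sin (w - 2 x)` after expansion,
which leaves `2 sin² x sin w`.
-/

theorem integral_max_zero_sub_smul {E : Type*} [NormedAddCommGroup E] [NormedSpace ℝ E]
    (μ : MeasureTheory.Measure ℝ) {a b c : ℝ} (hab : a ≤ b) (hbc : b ≤ c) (f : ℝ → E) :
    ∫ t in a..c, max 0 (t - b) • f t ∂μ = ∫ t in b..c, (t - b) • f t ∂μ := by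
  rw [intervalIntegral.integral_of_le (hab.trans hbc), intervalIntegral.integral_of_le hbc]
  have vanishes_left : ∀ t ∈ Set.Ioc a c \ Set.Ioc b c, max 0 (t - b) • f t = 0 := by
    rintro t ⟨⟨-, htc⟩, ht⟩
    have htb : t ≤ b := not_lt.mp fun hbt => ht ⟨hbt, htc⟩
    rw [max_eq_left (sub_nonpos.mpr htb), zero_smul]
  have linear_right : Set.EqOn (fun t => max 0 (t - b) • f t) (fun t => (t - b) • f t)
      (Set.Ioc b c) := fun t ht => by
    simp only [max_eq_right (sub_nonneg.mpr ht.1.le)]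
  rw [← MeasureTheory.setIntegral_congr_fun measurableSet_Ioc linear_right]
  exact MeasureTheory.setIntegral_eq_of_subset_of_forall_sdiff_eq_zero measurableSet_Ioc
    (Set.Ioc_subset_Ioc_left hab) vanishes_left

theorem integral_sub_mul_sin_mul {c : ℝ} (hc : c ≠ 0) (a b : ℝ) :
    ∫ t in a..b, (t - a) * sin (c * t) =
      (sin (c * b) - sin (c * a)) / c ^ 2 - (b - a) * cos (c * b) / c := by
  have hlin (t : ℝ) : HasDerivAt (fun t => t - a) 1 t := (hasDerivAt_id t).sub_const a
  have hcos (t : ℝ) : HasDerivAt (fun t => -cos (c * t) / c) (sin (c * t)) t := by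
    refine ((((hasDerivAt_id t).const_mul c).cos.neg).div_const c).congr_deriv ?_
    simp only [id_eq]
    field_simp
  have hint : ∫ t in a..b, cos (c * t) = (sin (c * b) - sin (c * a)) / c := by
    rw [intervalIntegral.integral_comp_mul_left _ hc, integral_cos, smul_eq_mul, inv_mul_eq_div]
  rw [intervalIntegral.integral_mul_deriv_eq_deriv_mul (fun t _ => hlin t) (fun t _ => hcos t)
    intervalIntegrable_const (Continuous.intervalIntegrable (by fun_prop) a b)]
  simp only [one_mul, intervalIntegral.integral_div, intervalIntegral.integral_neg, hint]
  field_simp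
  ring

theorem sin_sub_sin_sub_two_mul_of_cos_eq_zero {w : ℝ} (hw : cos w = 0) (x : ℝ) :
    sin w - sin (w - 2 * x) = 2 * sin x ^ 2 * sin w := by
  rw [sin_sub, hw, cos_two_mul, cos_sq']
  ring

theorem cos_pi_div_two_add_nat_mul_pi (k : ℕ) : cos (π / 2 + k * π) = 0 := by
  rw [cos_add_nat_mul_pi, cos_pi_div_two, mul_zero]

section BoundaryHat

variable {N : ℕ} {T : ℝ}

theorem hatFn_self (hN : N ≠ 0) (hT : 0 < T) (t : ℝ) :
    hatFn N T N t = N / T * max 0 (t - (T - T / N)) := by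
  rw [hatFn, if_pos rfl, mul_max_of_nonneg _ _ (by positivity), mul_zero]
  congr 1
  field_simp
  ring

theorem integral_hatFn_self_mul_sin (hN : N ≠ 0) (hT : 0 < T) {w : ℝ} (hw : w ≠ 0) :
    ∫ t in (0 : ℝ)..T, hatFn N T N t * sin (w * t / T) =
      N * T / w ^ 2 * (sin w - sin (w - w / N)) - T / w * cos w := by
  have hcell : T / N ≤ T := div_le_self hT.le (mod_cast Nat.one_le_iff_ne_zero.mpr hN)
  have hcell_nonneg : 0 ≤ T / N := by positivity
  have hright : w / T * T = w := div_mul_cancel₀ w hT.ne'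
  have hleft : w / T * (T - T / N) = w - w / N := by field_simp
  calc ∫ t in (0 : ℝ)..T, hatFn N T N t * sin (w * t / T)
    _ = N / T * ∫ t in (0 : ℝ)..T, max 0 (t - (T - T / N)) * sin (w / T * t) := by
      simp only [hatFn_self hN hT, mul_div_right_comm w, mul_assoc,
        intervalIntegral.integral_const_mul]
    _ = N / T * ∫ t in (T - T / N)..T, (t - (T - T / N)) * sin (w / T * t) :=
      congrArg (N / T * ·) <| integral_max_zero_sub_smul MeasureTheory.volume
        (sub_nonneg.mpr hcell) (sub_le_self T hcell_nonneg) fun t => sin (w / T * t)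
    _ = N / T * ((sin w - sin (w - w / N)) / (w / T) ^ 2 - T / N * cos w / (w / T)) := by
      rw [integral_sub_mul_sin_mul (div_ne_zero hw hT.ne'), hright, hleft, sub_sub_cancel]
    _ = N * T / w ^ 2 * (sin w - sin (w - w / N)) - T / w * cos w := by
      field_simp

end BoundaryHat

/-- For the boundary hat function and every `k ∈ ℕ`, the Fourier
coefficient satisfies `A_k^N = (1/N) · (sin² x_k / x_k²) · sin(π/2 + kπ)`,
where `x_k = (π/2 + kπ)/(2N)`. -/
theorem stmt_10 (N : ℕ) (hN : 1 ≤ N) (T : ℝ) (hT : 0 < T) (k : ℕ) :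
    fourierCoef N T k N =
      (1 / N) * (Real.sin ((π / 2 + k * π) / (2 * N)) ^ 2 / ((π / 2 + k * π) / (2 * N)) ^ 2) *
        Real.sin (π / 2 + k * π) := by
  have hN_ne : N ≠ 0 := Nat.one_le_iff_ne_zero.mp hN
  have hcos : cos (π / 2 + k * π) = 0 := cos_pi_div_two_add_nat_mul_pi k
  have hw : π / 2 + k * π ≠ 0 := by positivity
  rw [fourierCoef, integral_hatFn_self_mul_sin hN_ne hT hw]
  generalize π / 2 + k * π = w at hcos hw ⊢
  have hstep : w / N = 2 * (w / (2 * N)) := by field_simp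
  rw [hcos, hstep, sin_sub_sin_sub_two_mul_of_cos_eq_zero hcos]
  field_simp
  ring
end

section
/- Shift recurrence for the hat-function Fourier coefficients: for every j with 1 ≤ j ≤ N, every k with 0 ≤ k ≤ 2N−1, and every μ ∈ ℕ with μ ≥ 1, one has A_{k+2μN}^j = ((2k+1)² / (4μN + 2k + 1)²) · A_k^j. -/
open Real

/-!
On `[0, T]` every hat function is the second difference of three ramps `t ↦ max 0 (t - a)` divided
by the mesh size, so integrating by parts against `sin (ω t)` leaves the second difference of
`sin (ω ·)` at three nodes, divided by `ω ^ 2`; the boundary terms at `T` vanish because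
`cos (ω T) = 0`. Replacing `k` by `k + 2μN` adds `2πμi` to the phase at the `i`-th node. Hence the
nodal sines are unchanged, and only the factor `ω⁻²`, proportional to `(2k + 1)⁻²`, changes.
-/

theorem integral_sub_mul_sin {ω : ℝ} (hω : ω ≠ 0) (a b : ℝ) :
    ∫ t in a..b, (t - a) * sin (ω * t) =
      (sin (ω * b) - sin (ω * a)) / ω ^ 2 - (b - a) * cos (ω * b) / ω := by
  have hasDerivAt_primitive (t : ℝ) :
      HasDerivAt (fun t ↦ sin (ω * t) / ω ^ 2 - (t - a) * cos (ω * t) / ω)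
        ((t - a) * sin (ω * t)) t := by
    have h_phase : HasDerivAt (fun t ↦ ω * t) ω t := by
      simpa using (hasDerivAt_id t).const_mul ω
    have h_linear : HasDerivAt (fun t ↦ t - a) 1 t := (hasDerivAt_id t).sub_const a
    refine ((h_phase.sin.div_const _).sub ((h_linear.mul h_phase.cos).div_const _)).congr_deriv ?_
    field_simp
    ring
  rw [intervalIntegral.integral_eq_sub_of_hasDerivAt (fun t _ ↦ hasDerivAt_primitive t)
    (Continuous.intervalIntegrable (by fun_prop) a b)]
  ring

theorem integral_max_zero_sub_mul {f : ℝ → ℝ} (hf : Continuous f) {s a : ℝ} (hsa : s ≤ a)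
    (b : ℝ) :
    ∫ t in s..b, max 0 (t - a) * f t = ∫ t in min a b..b, (t - min a b) * f t := by
  have vanish {c : ℝ} (hca : c ≤ a) : ∫ t in s..c, max 0 (t - a) * f t = 0 := by
    refine intervalIntegral.integral_zero_ae (.of_forall fun t ht ↦ ?_)
    have hta : t ≤ a := (Set.mem_uIoc.mp ht).elim (fun h ↦ h.2.trans hca) fun h ↦ h.2.trans hsa
    rw [max_eq_left (sub_nonpos.mpr hta), zero_mul]
  rcases le_total a b with hab | hba
  · have integrable (c d : ℝ) :
        IntervalIntegrable (fun t ↦ max 0 (t - a) * f t) MeasureTheory.volume c d :=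
      Continuous.intervalIntegrable (by fun_prop) c d
    rw [← intervalIntegral.integral_add_adjacent_intervals (integrable s a) (integrable a b),
      vanish le_rfl, zero_add, min_eq_left hab]
    refine intervalIntegral.integral_congr fun t ht ↦ ?_
    rw [Set.uIcc_of_le hab] at ht
    simp only [max_eq_right (sub_nonneg.mpr ht.1)]
  · rw [vanish hba, min_eq_right hba, intervalIntegral.integral_same]

theorem max_zero_one_sub_abs_div {h : ℝ} (hh : 0 < h) (s : ℝ) :
    max 0 (1 - |s| / h) = (max 0 (s + h) - 2 * max 0 s + max 0 (s - h)) / h := by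
  have rescale : max 0 (1 - |s| / h) = max 0 (h - |s|) / h := by
    rw [← max_div_div_right hh.le, zero_div, sub_div, div_self hh.ne']
  rw [rescale]
  congr 1
  grind

/-- The angular frequency `(π/2 + kπ) / T` of the `k`-th sine mode on `[0, T]`. -/
noncomputable def sineFreq (T : ℝ) (k : ℕ) : ℝ := (π / 2 + k * π) / T

/-- The mesh node `t_i = i T / N`, clamped to `t_N = T` for `i > N`. Clamping lets the boundary
hat `φ_N`, whose right neighbour lies outside the mesh, obey the formulas for interior hats. -/
noncomputable def clampedNode (N : ℕ) (T : ℝ) (i : ℕ) : ℝ := (min i N : ℕ) * (T / N)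

theorem sineFreq_eq (T : ℝ) (k : ℕ) : sineFreq T k = (2 * k + 1) * (π / (2 * T)) := by
  rw [sineFreq]
  ring

theorem sineFreq_pos {T : ℝ} (hT : 0 < T) (k : ℕ) : 0 < sineFreq T k := by
  rw [sineFreq]
  positivity

theorem fourierCoef_eq_sineFreq (N : ℕ) (T : ℝ) (k j : ℕ) :
    fourierCoef N T k j = 2 / T * ∫ t in (0 : ℝ)..T, hatFn N T j t * sin (sineFreq T k * t) := by
  simp only [fourierCoef, sineFreq, div_mul_eq_mul_div]

theorem cos_sineFreq_mul {T : ℝ} (hT : T ≠ 0) (k : ℕ) : cos (sineFreq T k * T) = 0 := by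
  rw [sineFreq, div_mul_cancel₀ _ hT, add_comm, cos_add_pi_div_two, sin_nat_mul_pi, neg_zero]

section Mesh

variable {N : ℕ} {T : ℝ}

theorem clampedNode_eq_min (hN : 0 < N) (hT : 0 ≤ T) (i : ℕ) :
    clampedNode N T i = min (i * (T / N)) T := by
  rw [clampedNode, Nat.cast_min, min_mul_of_nonneg _ _ (by positivity),
    mul_div_cancel₀ T (by positivity)]

theorem sin_sineFreq_add_mul_clampedNode (hN : 0 < N) (hT : T ≠ 0) (k μ i : ℕ) :
    sin (sineFreq T (k + 2 * μ * N) * clampedNode N T i) =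
      sin (sineFreq T k * clampedNode N T i) := by
  rw [← sin_add_nat_mul_two_pi (sineFreq T k * clampedNode N T i) (μ * min i N)]
  congr 1
  simp only [sineFreq, clampedNode]
  push_cast
  field_simp
  ring

theorem hatFn_eq_second_difference (hN : 0 < N) (hT : 0 < T) (i : ℕ) {t : ℝ} (ht : t ≤ T) :
    hatFn N T (i + 1) t =
      (max 0 (t - i * (T / N)) - 2 * max 0 (t - (i + 1 : ℕ) * (T / N))
        + max 0 (t - (i + 2 : ℕ) * (T / N))) / (T / N) := by
  have hat_eq : hatFn N T (i + 1) t = max 0 (1 - |t - (i + 1 : ℕ) * (T / N)| / (T / N)) := by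
    rw [hatFn]
    split_ifs with h_boundary
    · have ht_node : t ≤ N * (T / N) := by rwa [mul_div_cancel₀ T (by positivity)]
      rw [h_boundary, abs_of_nonpos (sub_nonpos.mpr ht_node), neg_sub]
    · rfl
  rw [hat_eq, max_zero_one_sub_abs_div (by positivity)]
  push_cast
  ring_nf

theorem integral_max_zero_sub_node_mul_sin (hN : 0 < N) (hT : 0 < T) (k i : ℕ) :
    ∫ t in (0 : ℝ)..T, max 0 (t - i * (T / N)) * sin (sineFreq T k * t) =
      (sin (sineFreq T k * T) - sin (sineFreq T k * clampedNode N T i)) / sineFreq T k ^ 2 := by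
  rw [integral_max_zero_sub_mul (by fun_prop) (by positivity), ← clampedNode_eq_min hN hT.le,
    integral_sub_mul_sin (sineFreq_pos hT k).ne', cos_sineFreq_mul hT.ne', mul_zero, zero_div,
    sub_zero]

theorem integral_hatFn_mul_sin (hN : 0 < N) (hT : 0 < T) (k i : ℕ) :
    ∫ t in (0 : ℝ)..T, hatFn N T (i + 1) t * sin (sineFreq T k * t) =
      (2 * sin (sineFreq T k * clampedNode N T (i + 1)) - sin (sineFreq T k * clampedNode N T i)
        - sin (sineFreq T k * clampedNode N T (i + 2))) / (T / N * sineFreq T k ^ 2) := by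
  let ramp (m : ℕ) (t : ℝ) : ℝ := max 0 (t - m * (T / N)) * sin (sineFreq T k * t)
  have integrable (m : ℕ) : IntervalIntegrable (ramp m) MeasureTheory.volume 0 T :=
    Continuous.intervalIntegrable (by fun_prop) 0 T
  calc
    _ = ∫ t in (0 : ℝ)..T, (ramp i t - 2 * ramp (i + 1) t + ramp (i + 2) t) / (T / N) := by
      refine intervalIntegral.integral_congr fun t ht ↦ ?_
      rw [Set.uIcc_of_le hT.le] at ht
      simp only [ramp, hatFn_eq_second_difference hN hT i ht.2]
      ring
    _ = ((∫ t in (0 : ℝ)..T, ramp i t) - 2 * (∫ t in (0 : ℝ)..T, ramp (i + 1) t)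
          + ∫ t in (0 : ℝ)..T, ramp (i + 2) t) / (T / N) := by
      rw [intervalIntegral.integral_div, intervalIntegral.integral_add
        ((integrable i).sub ((integrable (i + 1)).const_mul 2)) (integrable (i + 2)),
        intervalIntegral.integral_sub (integrable i) ((integrable (i + 1)).const_mul 2),
        intervalIntegral.integral_const_mul]
    _ = _ := by
      simp only [ramp, integral_max_zero_sub_node_mul_sin hN hT]
      ring

theorem sineFreq_sq_mul_fourierCoef (hN : 0 < N) (hT : 0 < T) (k i : ℕ) :
    sineFreq T k ^ 2 * fourierCoef N T k (i + 1) =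
      2 * N / T ^ 2 * (2 * sin (sineFreq T k * clampedNode N T (i + 1))
        - sin (sineFreq T k * clampedNode N T i)
        - sin (sineFreq T k * clampedNode N T (i + 2))) := by
  have freq_ne_zero := (sineFreq_pos hT k).ne'
  rw [fourierCoef_eq_sineFreq, integral_hatFn_mul_sin hN hT]
  field_simp

end Mesh

theorem stmt_11_general (N : ℕ) (hN : 1 ≤ N) (T : ℝ) (hT : 0 < T) (j : ℕ) (hj : 1 ≤ j)
    (k μ : ℕ) :
    fourierCoef N T (k + 2 * μ * N) j =
      ((2 * k + 1 : ℝ) ^ 2 / (4 * μ * N + 2 * k + 1 : ℝ) ^ 2) * fourierCoef N T k j := by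
  obtain ⟨i, rfl⟩ := Nat.exists_eq_add_of_le' hj
  have shift_invariant :
      sineFreq T (k + 2 * μ * N) ^ 2 * fourierCoef N T (k + 2 * μ * N) (i + 1) =
        sineFreq T k ^ 2 * fourierCoef N T k (i + 1) := by
    simp only [sineFreq_sq_mul_fourierCoef hN hT, sin_sineFreq_add_mul_clampedNode hN hT.ne']
  have freq_shift :
      sineFreq T (k + 2 * μ * N) = (4 * μ * N + 2 * k + 1) * (π / (2 * T)) := by
    rw [sineFreq_eq]
    push_cast
    ring
  rw [freq_shift, sineFreq_eq, mul_pow, mul_pow] at shift_invariant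
  have scale_ne_zero : (π / (2 * T)) ^ 2 ≠ 0 := by positivity
  rw [div_mul_eq_mul_div, eq_div_iff (by positivity)]
  apply mul_left_cancel₀ scale_ne_zero
  linear_combination shift_invariant

/-- shift recurrence for the hat-function Fourier coefficients: for every
`j` with `1 ≤ j ≤ N`, every `k` with `0 ≤ k ≤ 2N−1`, and every `μ ∈ ℕ` with `μ ≥ 1`,
one has `A_{k+2μN}^j = ((2k+1)² / (4μN + 2k + 1)²) · A_k^j`. -/
theorem stmt_11 (N : ℕ) (hN : 1 ≤ N) (T : ℝ) (hT : 0 < T)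
    (j : ℕ) (hj1 : 1 ≤ j) (hj2 : j ≤ N)
    (k : ℕ) (hk : k ≤ 2 * N - 1) (μ : ℕ) (hμ : 1 ≤ μ) :
    fourierCoef N T (k + 2 * μ * N) j =
      ((2 * k + 1 : ℝ) ^ 2 / (4 * μ * N + 2 * k + 1 : ℝ) ^ 2) * fourierCoef N T k j :=
  stmt_11_general N hN T hT j hj1 k μ
end

section
/- Action of the lumped-boundary temporal mass matrix on discrete sine vectors: let M ∈ ℝ^{N×N} be the tridiagonal matrix with M[j,j] = 2h/3 for 1 ≤ j ≤ N−1, M[N,N] = h/3, M[j,j+1] = M[j+1,j] = h/6, and all other entries zero. For 0 ≤ ℓ ≤ N−1 let v_ℓ ∈ ℝ^N have components v_{ℓ,i} = sin((π/2 + ℓπ) i / N). Then (M v_ℓ)_j = (h/3)(2 + cos 2x_ℓ) v_{ℓ,j} for 1 ≤ j ≤ N−1, and (M v_ℓ)_N = (h/6)(2 + cos 2x_ℓ) v_{ℓ,N}, where x_ℓ = (π/2 + ℓπ)/(2N). -/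
open Real

/-- The tridiagonal temporal mass matrix with lumped boundary entry, indexed by
`Fin N` (where the index `j : Fin N` represents the node `j+1 ∈ {1,…,N}`):
`M[j,j] = 2h/3` for `1 ≤ j ≤ N−1`, `M[N,N] = h/3`, `M[j,j+1] = M[j+1,j] = h/6`,
all other entries zero. -/
noncomputable def massMat (N : ℕ) (h : ℝ) : Matrix (Fin N) (Fin N) ℝ :=
  fun j i =>
    if j = i then (if (j : ℕ) + 1 = N then h / 3 else 2 * h / 3)
    else if (j : ℕ) + 1 = (i : ℕ) ∨ (i : ℕ) + 1 = (j : ℕ) then h / 6 else 0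

/-- The discrete sine vector `v_ℓ ∈ ℝ^N` with components
`v_{ℓ,i} = sin((π/2 + ℓπ) i / N)` for `i = 1,…,N` (index `i : Fin N` is the node `i+1`). -/
noncomputable def sineVec (N : ℕ) (l : ℕ) : Fin N → ℝ :=
  fun i => Real.sin ((π / 2 + l * π) * ((i : ℕ) + 1) / N)

/-! In the interior, `M` acts by the stencil `(h/6) (1, 4, 1)`, for which every sequence `sin (k θ)`
is an eigenvector. Since it vanishes at `k = 0`, the first row follows the same pattern. When
`cos (N θ) = 0` the sequence is even about `k = N`, and the last row `(h/6) (1, 2)` of the matrix is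
half the interior stencil applied to this even extension, which halves the eigenvalue. -/

section Stencil

lemma sum_fin_ite_succ_eq {A : Type*} [AddCommMonoid A] (n k : ℕ) (g : ℕ → A) :
    (∑ i : Fin n, if (i : ℕ) + 1 = k then g (i + 1) else 0) =
      if 1 ≤ k ∧ k ≤ n then g k else 0 := by
  rw [Fin.sum_univ_eq_sum_range (fun i => if i + 1 = k then g (i + 1) else 0)]
  cases k with
  | zero => simp
  | succ k => simp

variable {N : ℕ} (h : ℝ) (j : Fin N)

lemma massMat_apply_mul (i : Fin N) (a : ℝ) :
    massMat N h j i * a =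
      massMat N h j j * (if (i : ℕ) + 1 = j + 1 then a else 0) +
        h / 6 * ((if (i : ℕ) + 1 = j then a else 0) + if (i : ℕ) + 1 = j + 2 then a else 0) := by
  simp only [massMat, Fin.ext_iff]
  split_ifs <;> first | omega | ring

lemma massMat_mulVec_apply {g : ℕ → ℝ} (g_zero : g 0 = 0) :
    (massMat N h).mulVec (fun i => g (i + 1)) j =
      massMat N h j j * g (j + 1) + h / 6 * (g j + if (j : ℕ) + 1 < N then g (j + 2) else 0) := by
  have left_neighbour : (if 1 ≤ (j : ℕ) ∧ (j : ℕ) ≤ N then g j else 0) = g j := by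
    rcases Nat.eq_zero_or_pos (j : ℕ) with hj | hj
    · simp [hj, g_zero]
    · exact if_pos ⟨hj, j.is_lt.le⟩
  rw [Matrix.mulVec, dotProduct, Finset.sum_congr rfl fun i _ => massMat_apply_mul h j i _]
  simp only [Finset.sum_add_distrib, ← Finset.mul_sum, sum_fin_ite_succ_eq, left_neighbour]
  simp [Nat.succ_le_iff]

variable {j}

lemma massMat_mulVec_apply_of_lt {g : ℕ → ℝ} (g_zero : g 0 = 0) (hj : (j : ℕ) + 1 < N) :
    (massMat N h).mulVec (fun i => g (i + 1)) j =
      h / 6 * (g j + 4 * g (j + 1) + g (j + 2)) := by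
  rw [massMat_mulVec_apply h j g_zero, if_pos hj, massMat, if_pos rfl, if_neg hj.ne]
  ring

lemma massMat_mulVec_apply_of_even {g : ℕ → ℝ} (g_zero : g 0 = 0) (hj : (j : ℕ) + 1 = N)
    (g_even : g (j + 2) = g j) :
    (massMat N h).mulVec (fun i => g (i + 1)) j =
      h / 12 * (g j + 4 * g (j + 1) + g (j + 2)) := by
  rw [massMat_mulVec_apply h j g_zero, if_neg hj.not_lt, massMat, if_pos rfl, if_pos hj, g_even]
  ring

end Stencil

section Sine

lemma sin_nat_mul_eq_succ_mul_sub (θ : ℝ) (k : ℕ) :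
    sin (k * θ) = sin ((k + 1 : ℕ) * θ) * cos θ - cos ((k + 1 : ℕ) * θ) * sin θ := by
  rw [← sin_sub, Nat.cast_add_one, add_one_mul, add_sub_cancel_right]

lemma sin_nat_succ_mul (θ : ℝ) (k : ℕ) :
    sin ((k + 1 : ℕ) * θ) = sin (k * θ) * cos θ + cos (k * θ) * sin θ := by
  rw [Nat.cast_add_one, add_one_mul, sin_add]

lemma sin_nat_mul_stencil (θ : ℝ) (k : ℕ) :
    sin (k * θ) + 4 * sin ((k + 1 : ℕ) * θ) + sin ((k + 2 : ℕ) * θ) =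
      2 * (2 + cos θ) * sin ((k + 1 : ℕ) * θ) := by
  rw [sin_nat_mul_eq_succ_mul_sub θ k, sin_nat_succ_mul θ (k + 1)]
  ring

lemma sin_nat_add_two_mul_of_cos_eq_zero {θ : ℝ} {k : ℕ} (hcos : cos ((k + 1 : ℕ) * θ) = 0) :
    sin ((k + 2 : ℕ) * θ) = sin (k * θ) := by
  rw [sin_nat_mul_eq_succ_mul_sub θ k, sin_nat_succ_mul θ (k + 1), hcos, zero_mul, add_zero,
    sub_zero]

variable {N : ℕ} (h θ : ℝ) {j : Fin N}

theorem massMat_mulVec_sin_of_lt (hj : (j : ℕ) + 1 < N) :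
    (massMat N h).mulVec (fun i => sin ((i + 1 : ℕ) * θ)) j =
      h / 3 * (2 + cos θ) * sin ((j + 1 : ℕ) * θ) := by
  rw [massMat_mulVec_apply_of_lt h (g := fun k => sin (k * θ)) (by simp) hj, sin_nat_mul_stencil]
  ring

variable {θ} in
theorem massMat_mulVec_sin_of_cos_eq_zero (hcos : cos (N * θ) = 0) (hj : (j : ℕ) + 1 = N) :
    (massMat N h).mulVec (fun i => sin ((i + 1 : ℕ) * θ)) j =
      h / 6 * (2 + cos θ) * sin ((j + 1 : ℕ) * θ) := by
  rw [← hj] at hcos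
  rw [massMat_mulVec_apply_of_even h (g := fun k => sin (k * θ)) (by simp) hj
    (sin_nat_add_two_mul_of_cos_eq_zero hcos), sin_nat_mul_stencil]
  ring

end Sine

section SineVec

/-- The angle `2 x_ℓ = (π/2 + ℓπ) / N` by which the argument of the sine advances from one entry of
`sineVec N l` to the next. -/
noncomputable def sineAngle (N l : ℕ) : ℝ :=
  2 * ((π / 2 + l * π) / (2 * N))

variable (N l : ℕ)

lemma sineVec_eq_sin_mul_sineAngle :
    sineVec N l = fun i : Fin N => sin ((i + 1 : ℕ) * sineAngle N l) := by
  funext i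
  rw [sineVec, sineAngle]
  congr 1
  push_cast
  ring

variable {N} in
lemma cos_mul_sineAngle (hN : N ≠ 0) : cos (N * sineAngle N l) = 0 := by
  have angle_eq : N * sineAngle N l = π / 2 + l * π := by
    rw [sineAngle]
    field_simp
  rw [angle_eq, cos_add_nat_mul_pi, cos_pi_div_two, mul_zero]

end SineVec

theorem stmt_15_general (N : ℕ) (h : ℝ) (l : ℕ) :
    (∀ j : Fin N, (j : ℕ) + 1 < N →
        (massMat N h).mulVec (sineVec N l) j =
          (h / 3) * (2 + cos (2 * ((π / 2 + l * π) / (2 * N)))) * sineVec N l j) ∧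
      (∀ j : Fin N, (j : ℕ) + 1 = N →
        (massMat N h).mulVec (sineVec N l) j =
          (h / 6) * (2 + cos (2 * ((π / 2 + l * π) / (2 * N)))) * sineVec N l j) := by
  rw [sineVec_eq_sin_mul_sineAngle]
  exact ⟨fun _ hj => massMat_mulVec_sin_of_lt h _ hj,
    fun j hj => massMat_mulVec_sin_of_cos_eq_zero h (cos_mul_sineAngle l j.pos.ne') hj⟩

/-- action of the lumped-boundary temporal mass matrix on discrete sine
vectors: for `0 ≤ ℓ ≤ N−1`, `(M v_ℓ)_j = (h/3)(2 + cos 2x_ℓ) v_{ℓ,j}` for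
`1 ≤ j ≤ N−1`, and `(M v_ℓ)_N = (h/6)(2 + cos 2x_ℓ) v_{ℓ,N}`, where
`x_ℓ = (π/2 + ℓπ)/(2N)`. -/
theorem stmt_15 (N : ℕ) (hN : 1 ≤ N) (h : ℝ) (hh : 0 < h) (l : ℕ) (hl : l ≤ N - 1) :
    (∀ j : Fin N, (j : ℕ) + 1 < N →
        (massMat N h).mulVec (sineVec N l) j =
          (h / 3) * (2 + Real.cos (2 * ((π / 2 + l * π) / (2 * N)))) * sineVec N l j) ∧
      (∀ j : Fin N, (j : ℕ) + 1 = N →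
        (massMat N h).mulVec (sineVec N l) j =
          (h / 6) * (2 + Real.cos (2 * ((π / 2 + l * π) / (2 * N)))) * sineVec N l j) :=
  stmt_15_general N h l
end
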